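/- arXiv:2312.15232 — 2 statements merged into one kernel-verified Lean document; each statement's English description precedes it below -/
import Mathlib

section
/- Let $G = \mathbb{R}^2 \setminus \{(x,0) : x \geq 0\}$ be the plane slit along the nonnegative real axis, and let $u(z) = \arg z$ denote the argument of $z$ chosen continuously with values in $(0, 2\pi)$ on $G$. Then $u$ satisfies the $(s, C)$-Harnack inequality in $G$ with $s = 1/2$ and $C = \frac{4+\pi}{4-\pi}$. -/
open Metric Set

/-- A continuous function `u : G → [0,∞)` on a plane domain `G ⊊ ℝ² ≅ ℂ` satisfies the
`(s, C)`-Harnack inequality in `G` if for every `x ∈ G` and every `r > 0` with `B(x,r) ⊆ G`,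
one has `u z₁ ≤ C * u z₂` for all `z₁, z₂` in the closed ball `B̄(x, s r)`. -/
def SatisfiesHarnack (u : ℂ → ℝ) (G : Set ℂ) (s C : ℝ) : Prop :=
  ∀ x ∈ G, ∀ r > (0 : ℝ), ball x r ⊆ G →
    ∀ z₁ ∈ closedBall x (s * r), ∀ z₂ ∈ closedBall x (s * r), u z₁ ≤ C * u z₂

/-- The argument of `z` chosen continuously with values in `(0, 2π)` on the plane slit along
the nonnegative real axis: it equals the principal argument when the latter is positive, and
the principal argument plus `2π` otherwise. -/
noncomputable def argSlit (z : ℂ) : ℝ :=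
  if 0 < Complex.arg z then Complex.arg z else Complex.arg z + 2 * Real.pi

/-!
Let `α` be the principal argument of `x`. The distance from `x` to the ray `[0, ∞)` is
`‖x‖ sin (min |α| (π / 2))`, so this bounds the radius `r` of a disc about `x` that avoids the
ray. Seen from the origin, the disc of radius `s r` about `x` has angular radius at most
`arcsin (s sin (min |α| (π / 2)))`, which is at most `s |α|` because the sine is concave on
`[0, π]`. Both `argSlit x` and `2π - argSlit x` are at least `|α|`, so `argSlit` does not jump
within that disc and deviates there from `argSlit x` by at most `s * argSlit x`. Hence its values
there have ratio at most `(1 + s) / (1 - s)`, which is `3 < (4 + π) / (4 - π)` for `s = 1 / 2`.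
-/

open Real ComplexConjugate

section Harnack

variable {u : ℂ → ℝ} {G : Set ℂ} {s c C C' : ℝ}

lemma SatisfiesHarnack.mono_const (h : SatisfiesHarnack u G s C) (hu : ∀ z, 0 ≤ u z)
    (hC : C ≤ C') : SatisfiesHarnack u G s C' :=
  fun x hx r hr hball z₁ hz₁ z₂ hz₂ ↦
    (h x hx r hr hball z₁ hz₁ z₂ hz₂).trans (mul_le_mul_of_nonneg_right hC (hu z₂))

lemma satisfiesHarnack_of_abs_sub_le (hc₀ : 0 ≤ c) (hc₁ : c < 1)
    (h : ∀ x ∈ G, ∀ r > 0, ball x r ⊆ G → ∀ z ∈ closedBall x (s * r), |u z - u x| ≤ c * u x) :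
    SatisfiesHarnack u G s ((1 + c) / (1 - c)) := by
  intro x hx r hr hball z₁ hz₁ z₂ hz₂
  have upper : u z₁ ≤ (1 + c) * u x := by
    linarith [(abs_le.1 (h x hx r hr hball z₁ hz₁)).2]
  have lower : (1 - c) * u x ≤ u z₂ := by
    linarith [(abs_le.1 (h x hx r hr hball z₂ hz₂)).1]
  have hc : 0 < 1 - c := sub_pos.2 hc₁
  calc u z₁ ≤ (1 + c) * u x := upper
    _ = (1 + c) / (1 - c) * ((1 - c) * u x) := by field_simp
    _ ≤ (1 + c) / (1 - c) * u z₂ := by gcongr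

end Harnack

section AngularRadius

variable {s θ : ℝ} {x z w : ℂ}

lemma mul_sin_le_sin_mul (hs₀ : 0 ≤ s) (hs₁ : s ≤ 1) (hθ₀ : 0 ≤ θ) (hθ : θ ≤ π) :
    s * sin θ ≤ sin (s * θ) := by
  simpa using strictConcaveOn_sin_Icc.concaveOn.2 ⟨hθ₀, hθ⟩ ⟨le_rfl, pi_pos.le⟩ hs₀
    (sub_nonneg.2 hs₁) (add_sub_cancel s 1)

lemma arcsin_mul_sin_le (hs₀ : 0 ≤ s) (hs₁ : s ≤ 1) (hθ₀ : 0 ≤ θ) (hθ : θ ≤ π / 2) :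
    arcsin (s * sin θ) ≤ s * θ := by
  have hsθ : s * θ ≤ π / 2 := (mul_le_of_le_one_left hθ₀ hs₁).trans hθ
  calc arcsin (s * sin θ) ≤ arcsin (sin (s * θ)) :=
        arcsin_le_arcsin (mul_sin_le_sin_mul hs₀ hs₁ hθ₀ (by linarith))
    _ = s * θ := arcsin_sin (by linarith [mul_nonneg hs₀ hθ₀, pi_pos]) hsθ

-- `|sin (arg w)|` is the distance from `1` to the line through `0` and `w`.
lemma abs_sin_arg_le_norm_sub_one (w : ℂ) : |sin w.arg| ≤ ‖w - 1‖ := by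
  rcases eq_or_ne w 0 with rfl | hw
  · simp
  have hw' : 0 < ‖w‖ := norm_pos_iff.2 hw
  have im_eq : (conj w * (w - 1)).im = w.im := by
    simp only [Complex.mul_im, Complex.conj_re, Complex.conj_im, Complex.sub_re, Complex.sub_im,
      Complex.one_re, Complex.one_im]
    ring
  rw [Complex.sin_arg, abs_div, abs_norm, div_le_iff₀' hw']
  calc |w.im| = |(conj w * (w - 1)).im| := by rw [im_eq]
    _ ≤ ‖conj w * (w - 1)‖ := Complex.abs_im_le_norm _
    _ = ‖w‖ * ‖w - 1‖ := by rw [norm_mul, Complex.norm_conj]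

lemma abs_arg_le_arcsin_norm_sub_one (hw : ‖w - 1‖ ≤ 1) : |w.arg| ≤ arcsin ‖w - 1‖ := by
  have re_nonneg : 0 ≤ w.re := by
    have := (abs_le.1 ((Complex.abs_re_le_norm (w - 1)).trans hw)).1
    rw [Complex.sub_re, Complex.one_re] at this
    linarith
  have abs_arg_le : |w.arg| ≤ π / 2 := Complex.abs_arg_le_pi_div_two_iff.2 re_nonneg
  rw [le_arcsin_iff_sin_le' ⟨by linarith [abs_nonneg w.arg, pi_pos], abs_arg_le⟩,
    ← abs_sin_eq_sin_abs_of_abs_le_pi (Complex.abs_arg_le_pi w)]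
  exact abs_sin_arg_le_norm_sub_one w

lemma abs_arg_div_le (hs₀ : 0 ≤ s) (hs₁ : s ≤ 1) (hx : x ≠ 0)
    (hz : ‖z - x‖ ≤ s * (‖x‖ * sin (min |x.arg| (π / 2)))) : |(z / x).arg| ≤ s * |x.arg| := by
  set θ := min |x.arg| (π / 2)
  have hθ₀ : 0 ≤ θ := le_min (abs_nonneg _) pi_div_two_pos.le
  have hθ : θ ≤ π / 2 := min_le_right _ _
  have mul_sin_le_one : s * sin θ ≤ 1 :=
    mul_le_one₀ hs₁ (sin_nonneg_of_nonneg_of_le_pi hθ₀ (by linarith [pi_pos])) (sin_le_one θ)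
  have norm_le : ‖z / x - 1‖ ≤ s * sin θ := by
    rw [div_sub_one hx, norm_div, div_le_iff₀ (norm_pos_iff.2 hx)]
    linarith
  calc |(z / x).arg| ≤ arcsin ‖z / x - 1‖ :=
        abs_arg_le_arcsin_norm_sub_one (norm_le.trans mul_sin_le_one)
    _ ≤ arcsin (s * sin θ) := arcsin_le_arcsin norm_le
    _ ≤ s * θ := arcsin_mul_sin_le hs₀ hs₁ hθ₀ hθ
    _ ≤ s * |x.arg| := mul_le_mul_of_nonneg_left (min_le_left _ _) hs₀

end AngularRadius

section ArgSlit

variable {x z w : ℂ} {r s : ℝ}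

lemma argSlit_mem_Ioc (z : ℂ) : argSlit z ∈ Ioc 0 (2 * π) := by
  unfold argSlit
  split_ifs with h
  · exact ⟨h, by linarith [Complex.arg_le_pi z, pi_pos]⟩
  · exact ⟨by linarith [Complex.neg_pi_lt_arg z, pi_pos], by linarith⟩

lemma abs_arg_le_argSlit (z : ℂ) : |z.arg| ≤ argSlit z := by
  unfold argSlit
  split_ifs with h
  · exact (abs_of_pos h).le
  · rw [abs_of_nonpos (not_lt.1 h)]
    linarith [Complex.neg_pi_lt_arg z]

lemma abs_arg_le_two_pi_sub_argSlit (z : ℂ) : |z.arg| ≤ 2 * π - argSlit z := by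
  unfold argSlit
  split_ifs with h
  · rw [abs_of_pos h]
    linarith [Complex.arg_le_pi z]
  · rw [abs_of_nonpos (not_lt.1 h)]
    linarith

lemma coe_argSlit (z : ℂ) : (argSlit z : Angle) = z.arg := by
  unfold argSlit
  split_ifs
  · rfl
  · rw [Angle.coe_add, Angle.coe_two_pi, add_zero]

lemma argSlit_mul (hz : z ≠ 0) (hw : w ≠ 0) (h : argSlit z + w.arg ∈ Ioc 0 (2 * π)) :
    argSlit (z * w) = argSlit z + w.arg := by
  have coe_eq : (argSlit (z * w) : Angle) = (argSlit z + w.arg : ℝ) := by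
    rw [coe_argSlit, Complex.arg_mul_coe_angle hz hw, Angle.coe_add, coe_argSlit]
  have : Fact (0 < 2 * π) := ⟨two_pi_pos⟩
  refine (AddCircle.coe_eq_coe_iff_of_mem_Ioc (a := 0) ?_ ?_).1 coe_eq
  · simpa only [zero_add] using argSlit_mem_Ioc (z * w)
  · simpa only [zero_add] using h

lemma radius_le_norm_mul_sin (hball : ball x r ⊆ {z : ℂ | ¬(z.im = 0 ∧ 0 ≤ z.re)}) :
    r ≤ ‖x‖ * sin (min |x.arg| (π / 2)) := by
  have radius_le_dist {t : ℝ} (ht : 0 ≤ t) : r ≤ dist (t : ℂ) x :=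
    not_lt.1 fun h ↦ hball h ⟨Complex.ofReal_im t, ht⟩
  rcases le_total |x.arg| (π / 2) with h | h
  · have dist_re : dist (x.re : ℂ) x = |x.im| := by
      rw [Complex.dist_of_re_eq (Complex.ofReal_re _), Complex.ofReal_im, dist_zero_left,
        norm_eq_abs]
    rw [min_eq_left h, ← abs_sin_eq_sin_abs_of_abs_le_pi (Complex.abs_arg_le_pi x),
      ← abs_norm x, ← abs_mul, Complex.norm_mul_sin_arg, ← dist_re]
    exact radius_le_dist (Complex.abs_arg_le_pi_div_two_iff.1 h)
  · rw [min_eq_right h, sin_pi_div_two, mul_one]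
    simpa using radius_le_dist le_rfl

lemma abs_argSlit_sub_le (hs₀ : 0 ≤ s) (hs₁ : s < 1) (hr : 0 < r)
    (hball : ball x r ⊆ {z : ℂ | ¬(z.im = 0 ∧ 0 ≤ z.re)}) (hz : z ∈ closedBall x (s * r)) :
    |argSlit z - argSlit x| ≤ s * argSlit x := by
  have ne_zero {y : ℂ} (hy : y ∈ ball x r) : y ≠ 0 := by
    rintro rfl
    exact hball hy ⟨rfl, le_rfl⟩
  have hx₀ : x ≠ 0 := ne_zero (mem_ball_self hr)
  have hz₀ : z ≠ 0 := ne_zero (closedBall_subset_ball (mul_lt_of_lt_one_left hr hs₁) hz)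
  have arg_div_le : |(z / x).arg| ≤ s * |x.arg| := by
    refine abs_arg_div_le hs₀ hs₁.le hx₀ ((mem_closedBall_iff_norm.1 hz).trans ?_)
    exact mul_le_mul_of_nonneg_left (radius_le_norm_mul_sin hball) hs₀
  have arg_div_le_argSlit : |(z / x).arg| ≤ s * argSlit x :=
    arg_div_le.trans (mul_le_mul_of_nonneg_left (abs_arg_le_argSlit x) hs₀)
  have no_jump : argSlit x + (z / x).arg ∈ Ioc 0 (2 * π) := by
    have lt_argSlit : s * argSlit x < argSlit x :=
      mul_lt_of_lt_one_left (argSlit_mem_Ioc x).1 hs₁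
    have le_abs_arg : s * |x.arg| ≤ |x.arg| := mul_le_of_le_one_left (abs_nonneg _) hs₁.le
    exact ⟨by linarith [neg_abs_le (z / x).arg],
      by linarith [le_abs_self (z / x).arg, abs_arg_le_two_pi_sub_argSlit x]⟩
  have argSlit_eq : argSlit z = argSlit x + (z / x).arg := by
    rw [← argSlit_mul hx₀ (div_ne_zero hz₀ hx₀) no_jump, mul_div_cancel₀ z hx₀]
  rwa [argSlit_eq, add_sub_cancel_left]

end ArgSlit

theorem stmt_1_general {s : ℝ} (hs₀ : 0 ≤ s) (hs₁ : s < 1) :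
    SatisfiesHarnack argSlit {z : ℂ | ¬(z.im = 0 ∧ 0 ≤ z.re)} s ((1 + s) / (1 - s)) :=
  satisfiesHarnack_of_abs_sub_le hs₀ hs₁ fun _ _ _ hr hball _ hz ↦
    abs_argSlit_sub_le hs₀ hs₁ hr hball hz

lemma three_le_four_add_pi_div_four_sub_pi : 3 ≤ (4 + π) / (4 - π) := by
  rw [le_div_iff₀ (sub_pos.2 pi_lt_four)]
  linarith [pi_gt_three]

/-- On the slit plane `G = ℝ² ∖ {(x,0) : x ≥ 0}`, the function `u(z) = arg z` (with values
in `(0, 2π)`) satisfies the `(s, C)`-Harnack inequality with `s = 1/2` and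
`C = (4+π)/(4-π)`. -/
theorem stmt_1 :
    SatisfiesHarnack argSlit {z : ℂ | ¬(z.im = 0 ∧ 0 ≤ z.re)} (1 / 2)
      ((4 + Real.pi) / (4 - Real.pi)) :=
  (stmt_1_general (by norm_num) (by norm_num)).mono_const (fun z ↦ (argSlit_mem_Ioc z).1.le)
    (le_of_eq_of_le (by norm_num) three_le_four_add_pi_div_four_sub_pi)
end

section
/- Let $R > 0$, $M > 0$, $a \in \mathbb{C}$, and let $u$ be a complex-valued harmonic function on the disk $B^2(a,R) = \{w \in \mathbb{C} : |w-a| < R\}$ with $|u(w)| \leq M$ for all $w \in B^2(a,R)$. Then for every $z \in \mathbb{C}$ with $0 < |z| < R$, $\left| u(a+z) - \frac{R^2 - |z|^2}{R^2 + |z|^2}\, u(a) \right| \leq \frac{2M}{\pi} \arctan\left( \frac{2R|z|}{R^2 - |z|^2} \right)$. -/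
open Metric Set

/-- A complex-valued function `u` is harmonic on `G ⊆ ℂ ≅ ℝ²` if it is twice continuously
differentiable (as a function of two real variables) and satisfies the Laplace equation
`∂²u/∂x² + ∂²u/∂y² = 0` on `G`. -/
def IsHarmonicOn (u : ℂ → ℂ) (G : Set ℂ) : Prop :=
  ContDiffOn ℝ 2 u G ∧ ∀ z ∈ G,
    iteratedFDeriv ℝ 2 u z ![1, 1] + iteratedFDeriv ℝ 2 u z ![Complex.I, Complex.I] = 0

/-!
By the Poisson formula and the mean value property, `u (a + z) - k • u a` is, for every constant
`k`, the circle average of `(P - k) • u`, where `P` is the Poisson kernel of `z`. It is therefore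
bounded by `M` times the average of `|P - k|`. The constant `k = (r² - |z|²) / (r² + |z|²)` is the
value of `P` at the endpoints of the diameter orthogonal to `z`, so `P - k` has constant sign on
each of the two half circles, where it is integrated by an elementary primitive of `P`. Vector
values reduce to real ones by pairing with a norming functional, and the open disk is exhausted by
closed ones.
-/

section

open InnerProductSpace MeasureTheory Real

lemma IsHarmonicOn.harmonicOnNhd {u : ℂ → ℂ} {G : Set ℂ} (hu : IsHarmonicOn u G)
    (hG : IsOpen G) : HarmonicOnNhd u G := by
  intro x hx
  have hGx : G ∈ nhds x := hG.mem_nhds hx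
  refine ⟨hu.1.contDiffAt hGx, ?_⟩
  rw [laplacian_eq_iteratedFDeriv_complexPlane]
  exact Filter.eventually_of_mem hGx hu.2

lemma norm_circleAverage_le_of_norm_le {E : Type*} [NormedAddCommGroup E] [NormedSpace ℝ E]
    {f : ℂ → E} {g : ℂ → ℝ} {c : ℂ} {r : ℝ} (hg : CircleIntegrable g c r)
    (hfg : ∀ ζ ∈ sphere c |r|, ‖f ζ‖ ≤ g ζ) :
    ‖circleAverage f c r‖ ≤ circleAverage g c r := by
  rw [circleAverage_def, circleAverage_def, norm_smul, smul_eq_mul,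
    norm_of_nonneg (inv_nonneg.2 two_pi_pos.le)]
  gcongr
  exact intervalIntegral.norm_integral_le_of_norm_le two_pi_pos.le
    (.of_forall fun θ _ ↦ hfg _ (circleMap_mem_sphere' c r θ)) hg

lemma arctan_two_mul_mul_div_sq_sub_sq {r s : ℝ} (h : |s| < r) :
    arctan (2 * r * s / (r ^ 2 - s ^ 2)) = 2 * arctan (s / r) := by
  have hr : 0 < r := (abs_nonneg s).trans_lt h
  obtain ⟨hrs, hsr⟩ := abs_lt.1 h
  have hdiv : s / r < 1 := (div_lt_one hr).2 hsr
  have hneg : -1 < s / r := by rwa [lt_div_iff₀ hr, neg_one_mul]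
  rw [two_mul_arctan hneg hdiv]
  congr 1
  field_simp

lemma mul_cos_le_abs (s θ : ℝ) : s * cos θ ≤ |s| :=
  calc s * cos θ ≤ |s| * |cos θ| := (le_abs_self _).trans_eq (abs_mul _ _)
    _ ≤ |s| := mul_le_of_le_one_right (abs_nonneg s) (abs_cos_le_one θ)

/-- The Poisson kernel of the disk of radius `r` in polar coordinates: `s` is the distance of the
evaluation point from the center and `θ` its angle with the boundary point, see
`poissonKernel_circleMap_circleMap`. -/
noncomputable def polarPoissonKernel (r s θ : ℝ) : ℝ :=
  (r ^ 2 - s ^ 2) / (r ^ 2 + s ^ 2 - 2 * r * s * cos θ)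

lemma poissonKernel_circleMap_circleMap (c : ℂ) (r s θ φ : ℝ) :
    poissonKernel c (circleMap c s φ) (circleMap c r θ) = polarPoissonKernel r s (θ - φ) := by
  have hsub : ‖circleMap 0 r θ - circleMap 0 s φ‖ ^ 2 =
      r ^ 2 + s ^ 2 - 2 * r * s * cos (θ - φ) := by
    rw [← Complex.normSq_eq_norm_sq, Complex.normSq_apply, cos_sub]
    simp only [circleMap_zero, Complex.sub_re, Complex.sub_im, Complex.re_ofReal_mul,
      Complex.im_ofReal_mul, Complex.exp_ofReal_mul_I_re, Complex.exp_ofReal_mul_I_im]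
    linear_combination r ^ 2 * sin_sq_add_cos_sq θ + s ^ 2 * sin_sq_add_cos_sq φ
  rw [poissonKernel_def, polarPoissonKernel, circleMap_sub_center, circleMap_sub_center, hsub,
    norm_circleMap_zero, norm_circleMap_zero, sq_abs, sq_abs]

lemma poissonKernel_add_circleMap (a z : ℂ) (r θ : ℝ) :
    poissonKernel a (a + z) (circleMap a r θ) = polarPoissonKernel r ‖z‖ (θ - z.arg) := by
  have hz : a + z = circleMap a ‖z‖ z.arg := by
    rw [circleMap, Complex.norm_mul_exp_arg_mul_I]
  rw [hz, poissonKernel_circleMap_circleMap]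

lemma polarPoissonKernel_pi_div_two (r s : ℝ) :
    polarPoissonKernel r s (π / 2) = (r ^ 2 - s ^ 2) / (r ^ 2 + s ^ 2) := by
  simp [polarPoissonKernel]

lemma polarPoissonKernel_periodic (r s : ℝ) :
    Function.Periodic (polarPoissonKernel r s) (2 * π) := fun θ ↦ by
  simp [polarPoissonKernel]

section

variable {r s : ℝ}

lemma sq_add_sq_sub_two_mul_mul_cos_pos (h : |s| < r) (θ : ℝ) :
    0 < r ^ 2 + s ^ 2 - 2 * r * s * cos θ := by
  have hr : 0 < r := (abs_nonneg s).trans_lt h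
  nlinarith [sq_abs s, sub_pos.2 h, mul_cos_le_abs s θ]

lemma continuous_polarPoissonKernel (h : |s| < r) : Continuous (polarPoissonKernel r s) :=
  continuous_const.div (by fun_prop) fun θ ↦ (sq_add_sq_sub_two_mul_mul_cos_pos h θ).ne'

lemma polarPoissonKernel_pi_div_two_le (hs : 0 ≤ s) (hsr : s < r) {θ : ℝ} (hθ : 0 ≤ cos θ) :
    polarPoissonKernel r s (π / 2) ≤ polarPoissonKernel r s θ := by
  have hr : 0 ≤ r := hs.trans hsr.le
  rw [polarPoissonKernel_pi_div_two, polarPoissonKernel]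
  have hsq : 0 ≤ r ^ 2 - s ^ 2 := by nlinarith
  have hD := sq_add_sq_sub_two_mul_mul_cos_pos ((abs_of_nonneg hs).trans_lt hsr) θ
  gcongr
  exact sub_le_self _ (by positivity)

lemma polarPoissonKernel_le_pi_div_two (hs : 0 ≤ s) (hsr : s < r) {θ : ℝ} (hθ : cos θ ≤ 0) :
    polarPoissonKernel r s θ ≤ polarPoissonKernel r s (π / 2) := by
  have hr : 0 < r := hs.trans_lt hsr
  rw [polarPoissonKernel_pi_div_two, polarPoissonKernel]
  have hsq : 0 ≤ r ^ 2 - s ^ 2 := by nlinarith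
  gcongr
  exact le_sub_self_iff _ |>.2 (mul_nonpos_of_nonneg_of_nonpos (by positivity) hθ)

-- The primitive is `θ - 2 * arg (r - s * exp (θ * I))`.
lemma hasDerivAt_polarPoissonKernel_primitive (h : |s| < r) (θ : ℝ) :
    HasDerivAt (fun θ ↦ θ + 2 * arctan (s * sin θ / (r - s * cos θ)))
      (polarPoissonKernel r s θ) θ := by
  have hD := sq_add_sq_sub_two_mul_mul_cos_pos h θ
  have hden : r - s * cos θ ≠ 0 := (sub_pos.2 ((mul_cos_le_abs s θ).trans_lt h)).ne'
  have hsq : 1 + (s * sin θ / (r - s * cos θ)) ^ 2 =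
      (r ^ 2 + s ^ 2 - 2 * r * s * cos θ) / (r - s * cos θ) ^ 2 := by
    field_simp
    linear_combination s ^ 2 * sin_sq_add_cos_sq θ
  have hquot := ((hasDerivAt_sin θ).const_mul s).div
    (((hasDerivAt_cos θ).const_mul s).const_sub r) hden
  refine ((hasDerivAt_id θ).add (hquot.arctan.const_mul 2)).congr_deriv ?_
  simp only [Pi.div_apply]
  rw [hsq, polarPoissonKernel]
  generalize hDdef : r ^ 2 + s ^ 2 - 2 * r * s * cos θ = D at hD
  field_simp
  linear_combination -hDdef - 2 * s ^ 2 * sin_sq_add_cos_sq θ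

lemma integral_polarPoissonKernel (h : |s| < r) (α β : ℝ) :
    ∫ θ in α..β, polarPoissonKernel r s θ =
      (β + 2 * arctan (s * sin β / (r - s * cos β))) -
        (α + 2 * arctan (s * sin α / (r - s * cos α))) :=
  intervalIntegral.integral_eq_sub_of_hasDerivAt
    (fun θ _ ↦ hasDerivAt_polarPoissonKernel_primitive h θ)
    ((continuous_polarPoissonKernel h).intervalIntegrable _ _)

lemma integral_polarPoissonKernel_near_half (h : |s| < r) :
    ∫ θ in -(π / 2)..π / 2, polarPoissonKernel r s θ = π + 4 * arctan (s / r) := by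
  rw [integral_polarPoissonKernel h]
  simp only [sin_neg, cos_neg, sin_pi_div_two, cos_pi_div_two, mul_neg, mul_one, mul_zero,
    sub_zero, neg_div, arctan_neg]
  ring

lemma integral_polarPoissonKernel_far_half (h : |s| < r) :
    ∫ θ in π / 2..π / 2 + π, polarPoissonKernel r s θ = π - 4 * arctan (s / r) := by
  rw [integral_polarPoissonKernel h]
  simp only [sin_add_pi, cos_add_pi, sin_pi_div_two, cos_pi_div_two, mul_neg, mul_one, mul_zero,
    neg_zero, sub_zero, neg_div, arctan_neg]
  ring

lemma integral_abs_polarPoissonKernel_sub_near_half (hs : 0 ≤ s) (hsr : s < r) :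
    ∫ θ in -(π / 2)..π / 2, |polarPoissonKernel r s θ - polarPoissonKernel r s (π / 2)| =
      π + 4 * arctan (s / r) - π * polarPoissonKernel r s (π / 2) := by
  have h : |s| < r := (abs_of_nonneg hs).trans_lt hsr
  have habs : EqOn (fun θ ↦ |polarPoissonKernel r s θ - polarPoissonKernel r s (π / 2)|)
      (fun θ ↦ polarPoissonKernel r s θ - polarPoissonKernel r s (π / 2))
      (uIcc (-(π / 2)) (π / 2)) := by
    intro θ hθ
    rw [uIcc_of_le (by linarith [pi_pos])] at hθ
    exact abs_of_nonneg
      (sub_nonneg.2 (polarPoissonKernel_pi_div_two_le hs hsr (cos_nonneg_of_mem_Icc hθ)))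
  rw [intervalIntegral.integral_congr habs, intervalIntegral.integral_sub
    ((continuous_polarPoissonKernel h).intervalIntegrable _ _) intervalIntegrable_const,
    integral_polarPoissonKernel_near_half h, intervalIntegral.integral_const, smul_eq_mul]
  ring

lemma integral_abs_polarPoissonKernel_sub_far_half (hs : 0 ≤ s) (hsr : s < r) :
    ∫ θ in π / 2..π / 2 + π, |polarPoissonKernel r s θ - polarPoissonKernel r s (π / 2)| =
      π * polarPoissonKernel r s (π / 2) - (π - 4 * arctan (s / r)) := by
  have h : |s| < r := (abs_of_nonneg hs).trans_lt hsr
  have habs : EqOn (fun θ ↦ |polarPoissonKernel r s θ - polarPoissonKernel r s (π / 2)|)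
      (fun θ ↦ polarPoissonKernel r s (π / 2) - polarPoissonKernel r s θ)
      (uIcc (π / 2) (π / 2 + π)) := by
    intro θ hθ
    rw [uIcc_of_le (by linarith [pi_pos])] at hθ
    have hcos : cos θ ≤ 0 := cos_nonpos_of_pi_div_two_le_of_le hθ.1 (by linarith [hθ.2])
    exact (abs_sub_comm _ _).trans <| abs_of_nonneg <|
      sub_nonneg.2 (polarPoissonKernel_le_pi_div_two hs hsr hcos)
  rw [intervalIntegral.integral_congr habs, intervalIntegral.integral_sub
    intervalIntegrable_const ((continuous_polarPoissonKernel h).intervalIntegrable _ _),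
    integral_polarPoissonKernel_far_half h, intervalIntegral.integral_const, smul_eq_mul]
  ring

lemma integral_abs_polarPoissonKernel_sub (hs : 0 ≤ s) (hsr : s < r) (α : ℝ) :
    ∫ θ in α..α + 2 * π, |polarPoissonKernel r s θ - polarPoissonKernel r s (π / 2)| =
      4 * arctan (2 * r * s / (r ^ 2 - s ^ 2)) := by
  have h : |s| < r := (abs_of_nonneg hs).trans_lt hsr
  have hper : Function.Periodic
      (fun θ ↦ |polarPoissonKernel r s θ - polarPoissonKernel r s (π / 2)|) (2 * π) :=
    (polarPoissonKernel_periodic r s).comp fun x ↦ |x - polarPoissonKernel r s (π / 2)|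
  have hint (α β : ℝ) : IntervalIntegrable
      (fun θ ↦ |polarPoissonKernel r s θ - polarPoissonKernel r s (π / 2)|) volume α β :=
    ((continuous_polarPoissonKernel h).sub continuous_const).abs.intervalIntegrable α β
  rw [hper.intervalIntegral_add_eq α (-(π / 2)),
    show -(π / 2) + 2 * π = π / 2 + π by ring,
    ← intervalIntegral.integral_add_adjacent_intervals (hint _ (π / 2)) (hint (π / 2) _),
    integral_abs_polarPoissonKernel_sub_near_half hs hsr,
    integral_abs_polarPoissonKernel_sub_far_half hs hsr, arctan_two_mul_mul_div_sq_sub_sq h]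
  ring

end

section

variable {r M : ℝ} {a z : ℂ}

lemma continuousOn_poissonKernel_sphere {c w : ℂ} (hw : w ∈ ball c r) :
    ContinuousOn (poissonKernel c w) (sphere c |r|) := by
  rw [poissonKernel_eq_re_herglotzRieszKernel]
  exact Complex.continuous_re.comp_continuousOn
    (continuousOn_herglotzRieszKernel_sphere hw)

lemma circleAverage_abs_poissonKernel_sub (hz : ‖z‖ < r) :
    circleAverage
        (fun ζ ↦ |poissonKernel a (a + z) ζ - (r ^ 2 - ‖z‖ ^ 2) / (r ^ 2 + ‖z‖ ^ 2)|) a r =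
      2 / π * arctan (2 * r * ‖z‖ / (r ^ 2 - ‖z‖ ^ 2)) := by
  have hint := integral_abs_polarPoissonKernel_sub (norm_nonneg z) hz 0
  rw [zero_add] at hint
  simp only [circleAverage_eq_integral_add z.arg, poissonKernel_add_circleMap,
    add_sub_cancel_right, ← polarPoissonKernel_pi_div_two, hint, smul_eq_mul]
  field_simp
  ring

lemma abs_sub_le_of_harmonicOnNhd_closedBall {v : ℂ → ℝ}
    (hv : HarmonicOnNhd v (closedBall a r)) (hM : ∀ w ∈ sphere a r, |v w| ≤ M)
    (hz : ‖z‖ < r) :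
    |v (a + z) - (r ^ 2 - ‖z‖ ^ 2) / (r ^ 2 + ‖z‖ ^ 2) * v a| ≤
      2 * M / π * arctan (2 * r * ‖z‖ / (r ^ 2 - ‖z‖ ^ 2)) := by
  have hr : |r| = r := abs_of_pos ((norm_nonneg z).trans_lt hz)
  set k : ℝ := (r ^ 2 - ‖z‖ ^ 2) / (r ^ 2 + ‖z‖ ^ 2)
  have hzball : a + z ∈ ball a r := by simpa using hz
  have hPcont := continuousOn_poissonKernel_sphere hzball
  have hvcont : ContinuousOn v (sphere a |r|) :=
    hv.continuousOn.mono (hr.symm ▸ sphere_subset_closedBall)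
  have hdiff : ContinuousOn (fun ζ ↦ |poissonKernel a (a + z) ζ - k|) (sphere a |r|) :=
    (hPcont.sub continuousOn_const).abs
  have hrepr : v (a + z) - k * v a =
      circleAverage (poissonKernel a (a + z) • v - k • v) a r := by
    rw [circleAverage_sub (hPcont.smul hvcont).circleIntegrable'
        (hvcont.const_smul k).circleIntegrable', circleAverage_smul,
      hv.circleAverage_poissonKernel_smul hzball,
      InnerProductSpace.HarmonicOnNhd.circleAverage_eq (by rwa [hr]), smul_eq_mul]
  have hbound (ζ : ℂ) (hζ : ζ ∈ sphere a |r|) :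
      ‖(poissonKernel a (a + z) • v - k • v) ζ‖ ≤ M * |poissonKernel a (a + z) ζ - k| := by
    rw [Pi.sub_apply, Pi.smul_apply', Pi.smul_apply, ← sub_smul, norm_smul, mul_comm]
    simp only [norm_eq_abs]
    gcongr
    exact hM ζ (hr ▸ hζ)
  calc |v (a + z) - k * v a|
      ≤ circleAverage (M • fun ζ ↦ |poissonKernel a (a + z) ζ - k|) a r := by
        rw [hrepr, ← norm_eq_abs]
        exact norm_circleAverage_le_of_norm_le (hdiff.const_smul M).circleIntegrable' hbound
    _ = 2 * M / π * arctan (2 * r * ‖z‖ / (r ^ 2 - ‖z‖ ^ 2)) := by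
        rw [circleAverage_smul, circleAverage_abs_poissonKernel_sub hz, smul_eq_mul]
        ring

variable {F : Type*} [NormedAddCommGroup F] [NormedSpace ℝ F] {u : ℂ → F}

lemma norm_sub_le_of_harmonicOnNhd_closedBall
    (hu : HarmonicOnNhd u (closedBall a r)) (hM : ∀ w ∈ sphere a r, ‖u w‖ ≤ M)
    (hz : ‖z‖ < r) :
    ‖u (a + z) - ((r ^ 2 - ‖z‖ ^ 2) / (r ^ 2 + ‖z‖ ^ 2)) • u a‖ ≤
      2 * M / π * arctan (2 * r * ‖z‖ / (r ^ 2 - ‖z‖ ^ 2)) := by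
  set k : ℝ := (r ^ 2 - ‖z‖ ^ 2) / (r ^ 2 + ‖z‖ ^ 2)
  obtain ⟨g, hg, hgnorm⟩ := exists_dual_vector'' ℝ (u (a + z) - k • u a)
  have hgM (w : ℂ) (hw : w ∈ sphere a r) : |g (u w)| ≤ M :=
    (g.le_of_opNorm_le hg (u w)).trans (by simpa using hM w hw)
  calc ‖u (a + z) - k • u a‖
      = g (u (a + z)) - k * g (u a) := by
        rw [← smul_eq_mul, ← map_smul, ← map_sub, hgnorm, RCLike.ofReal_real_eq_id, id]
    _ ≤ 2 * M / π * arctan (2 * r * ‖z‖ / (r ^ 2 - ‖z‖ ^ 2)) :=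
        (le_abs_self _).trans (abs_sub_le_of_harmonicOnNhd_closedBall (hu.comp_CLM g) hgM hz)

theorem stmt_8_general {R : ℝ} (hu : HarmonicOnNhd u (ball a R))
    (hM : ∀ w ∈ ball a R, ‖u w‖ ≤ M) (hz : ‖z‖ < R) :
    ‖u (a + z) - ((R ^ 2 - ‖z‖ ^ 2) / (R ^ 2 + ‖z‖ ^ 2)) • u a‖ ≤
      2 * M / π * arctan (2 * R * ‖z‖ / (R ^ 2 - ‖z‖ ^ 2)) := by
  have hR : 0 < R := (norm_nonneg z).trans_lt hz
  have hadd : R ^ 2 + ‖z‖ ^ 2 ≠ 0 := by positivity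
  have hsub : R ^ 2 - ‖z‖ ^ 2 ≠ 0 := by nlinarith [norm_nonneg z]
  have hleft : ContinuousAt
      (fun r : ℝ ↦ ‖u (a + z) - ((r ^ 2 - ‖z‖ ^ 2) / (r ^ 2 + ‖z‖ ^ 2)) • u a‖) R := by
    fun_prop (disch := assumption)
  have hright : ContinuousAt
      (fun r : ℝ ↦ 2 * M / π * arctan (2 * r * ‖z‖ / (r ^ 2 - ‖z‖ ^ 2))) R := by
    fun_prop (disch := assumption)
  refine le_of_tendsto_of_tendsto (b := nhdsWithin R (Iio R))
    (hleft.tendsto.mono_left nhdsWithin_le_nhds) (hright.tendsto.mono_left nhdsWithin_le_nhds) ?_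
  filter_upwards [Ioo_mem_nhdsLT hz] with r ⟨hzr, hrR⟩
  have hball : closedBall a r ⊆ ball a R := closedBall_subset_ball hrR
  exact norm_sub_le_of_harmonicOnNhd_closedBall (hu.mono hball)
    (fun w hw ↦ hM w (hball (sphere_subset_closedBall hw))) hzr

end

end

/-- Harmonic Schwarz lemma: if `u` is a complex-valued harmonic function on the disk
`B(a,R)` with `|u| ≤ M`, then for `0 < |z| < R`,
`|u(a+z) - ((R²-|z|²)/(R²+|z|²)) u(a)| ≤ (2M/π) arctan(2R|z|/(R²-|z|²))`. -/
theorem stmt_8 (R M : ℝ) (hR : 0 < R) (hM : 0 < M) (a : ℂ) (u : ℂ → ℂ)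
    (hu : IsHarmonicOn u (ball a R)) (hbd : ∀ w ∈ ball a R, ‖u w‖ ≤ M)
    (z : ℂ) (hz0 : 0 < ‖z‖) (hzR : ‖z‖ < R) :
    ‖u (a + z) - (((R ^ 2 - ‖z‖ ^ 2) / (R ^ 2 + ‖z‖ ^ 2) : ℝ) : ℂ) * u a‖ ≤
      2 * M / Real.pi * Real.arctan (2 * R * ‖z‖ / (R ^ 2 - ‖z‖ ^ 2)) := by
  rw [← Complex.real_smul]
  exact stmt_8_general (hu.harmonicOnNhd isOpen_ball) hbd hzR
end
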